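/- arXiv:2012.11799 — 2 statements merged into one kernel-verified Lean document; each statement's English description precedes it below -/
import Mathlib

section
/- Hodge decomposition: the cochain space C^1 is the internal direct sum C^1 = im(d0) ⊕ ker(Δ1) ⊕ im(d1^*), and the three subspaces im(d0), ker(Δ1), im(d1^*) are pairwise orthogonal with respect to the weighted inner product ⟨·,·⟩_1. -/
open Matrix

/-- Data-driven coboundary `d_k := B_{k+1} δ_k B_k⁻¹`. -/
noncomputable def dd {m n : ℕ} (δ : Matrix (Fin m) (Fin n) ℝ)
    (bl : Fin n → ℝ) (bu : Fin m → ℝ) : Matrix (Fin m) (Fin n) ℝ :=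
  Matrix.diagonal bu * δ * (Matrix.diagonal bl)⁻¹

/-- Data-driven codifferential `d_k^* := D_k⁻¹ δ_kᵀ D_{k+1}`. -/
noncomputable def dds {m n : ℕ} (δ : Matrix (Fin m) (Fin n) ℝ)
    (dl : Fin n → ℝ) (du : Fin m → ℝ) : Matrix (Fin n) (Fin m) ℝ :=
  (Matrix.diagonal dl)⁻¹ * δ.transpose * Matrix.diagonal du

/-- Weighted inner product `⟨x, y⟩_k := xᵀ D_k B_k⁻¹ y` on `C^k`. -/
noncomputable def wip {n : ℕ} (dv bv : Fin n → ℝ) (x y : Fin n → ℝ) : ℝ :=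
  x ⬝ᵥ ((Matrix.diagonal dv * (Matrix.diagonal bv)⁻¹) *ᵥ y)

lemma wip_eq {n : ℕ} (dv bv : Fin n → ℝ) (hb : ∀ i, 0 < bv i) (x y : Fin n → ℝ) :
    wip dv bv x y = ∑ i, x i * (dv i * (bv i)⁻¹ * y i) := by
  have h : (Matrix.diagonal bv)⁻¹ = Matrix.diagonal (fun i => (bv i)⁻¹) := by
    apply Matrix.inv_eq_right_inv
    rw [Matrix.diagonal_mul_diagonal, ← Matrix.diagonal_one]
    congr 1; funext i; exact mul_inv_cancel₀ (hb i).ne'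
  simp only [wip, h, Matrix.diagonal_mul_diagonal, dotProduct, Matrix.mulVec_diagonal]

lemma diag_inv {n : ℕ} (b : Fin n → ℝ) (hb : ∀ i, 0 < b i) :
    (Matrix.diagonal b)⁻¹ = Matrix.diagonal (fun i => (b i)⁻¹) := by
  apply Matrix.inv_eq_right_inv
  rw [Matrix.diagonal_mul_diagonal, ← Matrix.diagonal_one]
  congr 1; funext i; exact mul_inv_cancel₀ (hb i).ne'

lemma wip_adj {m n : ℕ} (δ : Matrix (Fin m) (Fin n) ℝ)
    (bl : Fin n → ℝ) (bu : Fin m → ℝ) (hbl : ∀ i, 0 < bl i) (hbu : ∀ i, 0 < bu i)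
    (dl : Fin n → ℝ) (du : Fin m → ℝ) (hdl : ∀ i, 0 < dl i)
    (x : Fin n → ℝ) (y : Fin m → ℝ) :
    wip du bu (dd δ bl bu *ᵥ x) y = wip dl bl x (dds δ dl du *ᵥ y) := by
  rw [wip_eq _ _ hbu, wip_eq _ _ hbl]
  simp only [dd, dds, diag_inv _ hbl, diag_inv _ hdl, Matrix.mulVec, dotProduct,
    Matrix.mul_diagonal, Matrix.diagonal_mul, Matrix.transpose_apply, Finset.mul_sum,
    Finset.sum_mul]
  rw [Finset.sum_comm]
  refine Finset.sum_congr rfl fun j _ => Finset.sum_congr rfl fun i _ => ?_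
  have := (hbu i).ne'
  have := (hdl j).ne'
  have := (hbl j).ne'
  field_simp

lemma dd_comp {n0 n1 n2 : ℕ} (δ0 : Matrix (Fin n1) (Fin n0) ℝ) (δ1 : Matrix (Fin n2) (Fin n1) ℝ)
    (hδ : δ1 * δ0 = 0) (b0 : Fin n0 → ℝ) (b1 : Fin n1 → ℝ) (b2 : Fin n2 → ℝ)
    (hb1 : ∀ i, 0 < b1 i) : dd δ1 b1 b2 * dd δ0 b0 b1 = 0 := by
  have h : (Matrix.diagonal b1)⁻¹ * Matrix.diagonal b1 = 1 := by
    rw [diag_inv _ hb1, Matrix.diagonal_mul_diagonal, ← Matrix.diagonal_one]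
    congr 1; funext i; exact inv_mul_cancel₀ (hb1 i).ne'
  calc dd δ1 b1 b2 * dd δ0 b0 b1 = Matrix.diagonal b2 * δ1 *
        ((Matrix.diagonal b1)⁻¹ * Matrix.diagonal b1) * δ0 * (Matrix.diagonal b0)⁻¹ := by
          simp only [dd, Matrix.mul_assoc]
    _ = Matrix.diagonal b2 * (δ1 * δ0) * (Matrix.diagonal b0)⁻¹ := by
          rw [h]; simp only [Matrix.mul_assoc, Matrix.one_mul]
    _ = 0 := by rw [hδ]; simp

lemma wip_comm {n : ℕ} (d b : Fin n → ℝ) (hb : ∀ i, 0 < b i) (x y : Fin n → ℝ) :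
    wip d b x y = wip d b y x := by
  rw [wip_eq _ _ hb, wip_eq _ _ hb]
  exact Finset.sum_congr rfl fun i _ => by ring

lemma wip_add {n : ℕ} (d b : Fin n → ℝ) (x y z : Fin n → ℝ) :
    wip d b x (y + z) = wip d b x y + wip d b x z := by
  simp [wip, Matrix.mulVec_add, dotProduct_add]

lemma wip_zero {n : ℕ} (d b : Fin n → ℝ) (x : Fin n → ℝ) : wip d b x 0 = 0 := by
  simp [wip]

lemma wip_nonneg {n : ℕ} (d b : Fin n → ℝ) (hd : ∀ i, 0 < d i) (hb : ∀ i, 0 < b i)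
    (x : Fin n → ℝ) : 0 ≤ wip d b x x := by
  rw [wip_eq _ _ hb]
  refine Finset.sum_nonneg fun i _ => ?_
  have : x i * (d i * (b i)⁻¹ * x i) = d i * (b i)⁻¹ * (x i * x i) := by ring
  rw [this]
  exact mul_nonneg (mul_pos (hd i) (inv_pos.2 (hb i))).le (mul_self_nonneg _)

lemma wip_def {n : ℕ} (d b : Fin n → ℝ) (hd : ∀ i, 0 < d i) (hb : ∀ i, 0 < b i)
    (x : Fin n → ℝ) (h : wip d b x x = 0) : x = 0 := by
  rw [wip_eq _ _ hb] at h
  have e : ∀ i, x i * (d i * (b i)⁻¹ * x i) = d i * (b i)⁻¹ * (x i * x i) := fun i => by ring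
  rw [Finset.sum_eq_zero_iff_of_nonneg] at h
  · funext i
    have := h i (Finset.mem_univ i)
    rw [e] at this
    have hp := (mul_pos (hd i) (inv_pos.2 (hb i))).ne'
    simpa using (mul_eq_zero.1 this).resolve_left hp
  · intro i _
    rw [e]
    exact mul_nonneg (mul_pos (hd i) (inv_pos.2 (hb i))).le (mul_self_nonneg _)

/-- Hodge decomposition: `C^1 = im(d0) ⊕ ker(Δ1) ⊕ im(d1^*)`, an internal direct sum (every
`u ∈ C^1` decomposes uniquely as a sum of elements of the three subspaces), and the three
subspaces are pairwise orthogonal with respect to the weighted inner product `⟨·,·⟩_1`. -/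
theorem ddec_hodge_decomposition
    (n0 n1 n2 : ℕ) (hn0 : 0 < n0) (hn1 : 0 < n1) (hn2 : 0 < n2)
    (δ0 : Matrix (Fin n1) (Fin n0) ℝ) (δ1 : Matrix (Fin n2) (Fin n1) ℝ)
    (hδ : δ1 * δ0 = 0)
    (bv0 : Fin n0 → ℝ) (bv1 : Fin n1 → ℝ) (bv2 : Fin n2 → ℝ)
    (hb0 : ∀ i, 0 < bv0 i) (hb1 : ∀ i, 0 < bv1 i) (hb2 : ∀ i, 0 < bv2 i)
    (dv0 : Fin n0 → ℝ) (dv1 : Fin n1 → ℝ) (dv2 : Fin n2 → ℝ)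
    (hd0 : ∀ i, 0 < dv0 i) (hd1 : ∀ i, 0 < dv1 i) (hd2 : ∀ i, 0 < dv2 i)
    :
    (∀ u : Fin n1 → ℝ,
      ∃! t : LinearMap.range (dd δ0 bv0 bv1).mulVecLin ×
             LinearMap.ker ((dd δ0 bv0 bv1 * dds δ0 dv0 dv1 +
               dds δ1 dv1 dv2 * dd δ1 bv1 bv2).mulVecLin) ×
             LinearMap.range (dds δ1 dv1 dv2).mulVecLin,
        u = (t.1 : Fin n1 → ℝ) + (t.2.1 : Fin n1 → ℝ) + (t.2.2 : Fin n1 → ℝ)) ∧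
    (∀ x ∈ LinearMap.range (dd δ0 bv0 bv1).mulVecLin,
      ∀ y ∈ LinearMap.ker ((dd δ0 bv0 bv1 * dds δ0 dv0 dv1 +
               dds δ1 dv1 dv2 * dd δ1 bv1 bv2).mulVecLin),
        wip dv1 bv1 x y = 0) ∧
    (∀ x ∈ LinearMap.range (dd δ0 bv0 bv1).mulVecLin,
      ∀ z ∈ LinearMap.range (dds δ1 dv1 dv2).mulVecLin,
        wip dv1 bv1 x z = 0) ∧
    (∀ y ∈ LinearMap.ker ((dd δ0 bv0 bv1 * dds δ0 dv0 dv1 +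
               dds δ1 dv1 dv2 * dd δ1 bv1 bv2).mulVecLin),
      ∀ z ∈ LinearMap.range (dds δ1 dv1 dv2).mulVecLin,
        wip dv1 bv1 y z = 0) := by
  have adj0 := wip_adj δ0 bv0 bv1 hb0 hb1 dv0 dv1 hd0
  have adj1 := wip_adj δ1 bv1 bv2 hb1 hb2 dv1 dv2 hd1
  have comp := dd_comp δ0 δ1 hδ bv0 bv1 bv2 hb1
  have c0 := wip_comm dv0 bv0 hb0
  have c1 := wip_comm dv1 bv1 hb1
  have c2 := wip_comm dv2 bv2 hb2
  have p0 := wip_nonneg dv0 bv0 hd0 hb0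
  have p2 := wip_nonneg dv2 bv2 hd2 hb2
  have z0 := wip_def dv0 bv0 hd0 hb0
  have z1 := wip_def dv1 bv1 hd1 hb1
  have z2 := wip_def dv2 bv2 hd2 hb2
  generalize dd δ0 bv0 bv1 = A at *
  generalize dds δ0 dv0 dv1 = As at *
  generalize dd δ1 bv1 bv2 = E at *
  generalize dds δ1 dv1 dv2 = Es at *
  have comp' : ∀ x, E *ᵥ (A *ᵥ x) = 0 := fun x => by
    rw [Matrix.mulVec_mulVec, comp, Matrix.zero_mulVec]
  have lap : ∀ x, (A * As + Es * E).mulVecLin x = A *ᵥ (As *ᵥ x) + Es *ᵥ (E *ᵥ x) := fun x => by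
    simp [Matrix.mulVecLin_apply, Matrix.add_mulVec, Matrix.mulVec_mulVec]
  have quad : ∀ x y, wip dv1 bv1 x ((A * As + Es * E).mulVecLin y) =
      wip dv0 bv0 (As *ᵥ x) (As *ᵥ y) + wip dv2 bv2 (E *ᵥ x) (E *ᵥ y) := fun x y => by
    rw [lap, wip_add, ← adj1, c1, adj0, c0]
  have hker : ∀ y ∈ LinearMap.ker (A * As + Es * E).mulVecLin,
      As *ᵥ y = 0 ∧ E *ᵥ y = 0 := by
    intro y hy
    have h := quad y y
    rw [LinearMap.mem_ker.1 hy, wip_zero] at h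
    have h1 := p0 (As *ᵥ y)
    have h2 := p2 (E *ᵥ y)
    exact ⟨z0 _ (by linarith), z2 _ (by linarith)⟩
  have o1 : ∀ x ∈ LinearMap.range A.mulVecLin,
      ∀ y ∈ LinearMap.ker (A * As + Es * E).mulVecLin, wip dv1 bv1 x y = 0 := by
    rintro _ ⟨x, rfl⟩ y hy
    rw [Matrix.mulVecLin_apply, adj0, (hker y hy).1, wip_zero]
  have o2 : ∀ x ∈ LinearMap.range A.mulVecLin,
      ∀ z ∈ LinearMap.range Es.mulVecLin, wip dv1 bv1 x z = 0 := by
    rintro _ ⟨x, rfl⟩ _ ⟨z, rfl⟩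
    rw [Matrix.mulVecLin_apply, Matrix.mulVecLin_apply, ← adj1, comp', c2, wip_zero]
  have o3 : ∀ y ∈ LinearMap.ker (A * As + Es * E).mulVecLin,
      ∀ z ∈ LinearMap.range Es.mulVecLin, wip dv1 bv1 y z = 0 := by
    rintro y hy _ ⟨z, rfl⟩
    rw [Matrix.mulVecLin_apply, ← adj1, (hker y hy).2, c2, wip_zero]
  refine ⟨fun u => ?_, o1, o2, o3⟩
  generalize hL : (A * As + Es * E).mulVecLin = L at *
  have dis : Disjoint (LinearMap.ker L) (LinearMap.range L) := by
    rw [Submodule.disjoint_def]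
    rintro _ hx ⟨v, rfl⟩
    apply z1
    rw [quad, (hker _ hx).1, (hker _ hx).2, c0, wip_zero, c2, wip_zero, add_zero]
  have top : LinearMap.ker L ⊔ LinearMap.range L = ⊤ := by
    apply Submodule.eq_top_of_disjoint _ _ _ dis
    rw [add_comm, LinearMap.finrank_range_add_finrank_ker]
  have hu : u ∈ LinearMap.ker L ⊔ LinearMap.range L := top ▸ Submodule.mem_top
  obtain ⟨k, hk, _, ⟨v, rfl⟩, rfl⟩ := Submodule.mem_sup.1 hu
  refine ⟨⟨⟨A *ᵥ (As *ᵥ v), ⟨_, rfl⟩⟩, ⟨k, hk⟩, ⟨Es *ᵥ (E *ᵥ v), ⟨_, rfl⟩⟩⟩, ?_, ?_⟩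
  · simp only [lap]; abel
  · rintro ⟨⟨a, ha⟩, ⟨b, hb⟩, ⟨c, hc⟩⟩ h
    simp only at h
    have ha' := Submodule.sub_mem _ ha (⟨As *ᵥ v, rfl⟩ : A *ᵥ (As *ᵥ v) ∈ LinearMap.range A.mulVecLin)
    have hb' := Submodule.sub_mem _ hb hk
    have hc' := Submodule.sub_mem _ hc (⟨E *ᵥ v, rfl⟩ : Es *ᵥ (E *ᵥ v) ∈ LinearMap.range Es.mulVecLin)
    have hs : (a - A *ᵥ (As *ᵥ v)) + ((b - k) + (c - Es *ᵥ (E *ᵥ v))) = 0 := by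
      rw [lap] at h
      have : (a - A *ᵥ (As *ᵥ v)) + ((b - k) + (c - Es *ᵥ (E *ᵥ v))) =
        (a + b + c) - (k + (A *ᵥ (As *ᵥ v) + Es *ᵥ (E *ᵥ v))) := by abel
      rw [this, h, sub_self]
    have e : ∀ w, wip dv1 bv1 w (a - A *ᵥ (As *ᵥ v)) + (wip dv1 bv1 w (b - k) +
        wip dv1 bv1 w (c - Es *ᵥ (E *ᵥ v))) = 0 := fun w => by
      rw [← wip_add, ← wip_add, hs, wip_zero]
    have r1 : a - A *ᵥ (As *ᵥ v) = 0 := by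
      apply z1
      have := e (a - A *ᵥ (As *ᵥ v))
      rw [o1 _ ha' _ hb', o2 _ ha' _ hc'] at this
      simpa using this
    have r2 : b - k = 0 := by
      apply z1
      have := e (b - k)
      rw [c1 _ (a - _), o1 _ ha' _ hb', o3 _ hb' _ hc'] at this
      simpa using this
    have r3 : c - Es *ᵥ (E *ᵥ v) = 0 := by
      rw [r1, r2] at hs
      simpa using hs
    exact Prod.ext (Subtype.ext (sub_eq_zero.1 r1))
      (Prod.ext (Subtype.ext (sub_eq_zero.1 r2)) (Subtype.ext (sub_eq_zero.1 r3)))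
end

section
/- Well-posedness of the nonlinearly perturbed problem: there exists a unique u ∈ V such that a(u, v) + ε ⟨N(G u), G v⟩ = F(v) for all v ∈ V, and this solution satisfies ‖u‖_a ≤ ‖F‖_{-a} / (1 − εL), where ‖F‖_{-a} := sup { F(v) : v ∈ V, ‖v‖_a = 1 } is the dual norm of F. -/
open RealInnerProductSpace

/-- Well-posedness of the nonlinearly perturbed problem: there exists a unique `u ∈ V` with
`a(u, v) + ε ⟨N(G u), G v⟩ = F(v)` for all `v ∈ V`, and this solution satisfies
`‖u‖_a ≤ ‖F‖_{-a} / (1 − εL)`, where `‖F‖_{-a}` is the dual (operator) norm of `F`. Here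
`a(·,·)` is the inner product of `V` and `‖·‖_a` its induced norm. -/
theorem perturbed_hodge_laplacian_well_posed
    {V W : Type*}
    [NormedAddCommGroup V] [InnerProductSpace ℝ V] [FiniteDimensional ℝ V]
    [NormedAddCommGroup W] [InnerProductSpace ℝ W] [FiniteDimensional ℝ W]
    (G : V →ₗ[ℝ] W) (hG : ∀ v : V, ‖G v‖ ≤ ‖v‖)
    (N : W → W) (L : ℝ) (hL : 0 ≤ L)
    (hNLip : ∀ w1 w2 : W, ‖N w1 - N w2‖ ≤ L * ‖w1 - w2‖)
    (hN0 : N 0 = 0)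
    (ε : ℝ) (hε : 0 ≤ ε) (hεL : ε * L < 1)
    (F : V →L[ℝ] ℝ) :
    (∃! u : V, ∀ v : V, ⟪u, v⟫ + ε * ⟪N (G u), G v⟫ = F v) ∧
    (∀ u : V, (∀ v : V, ⟪u, v⟫ + ε * ⟪N (G u), G v⟫ = F v) →
      ‖u‖ ≤ ‖F‖ / (1 - ε * L)) := by
  have : CompleteSpace V := FiniteDimensional.complete ℝ V
  have h1 : 0 < 1 - ε * L := by linarith
  set A : W →ₗ[ℝ] V := LinearMap.adjoint G with hA
  have hAG : ∀ w v, ⟪A w, v⟫ = ⟪w, G v⟫ := fun w v => LinearMap.adjoint_inner_left G v w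
  have hAn : ∀ w, ‖A w‖ ≤ ‖w‖ := by
    intro w
    have e1 : ‖A w‖ * ‖A w‖ = ⟪w, G (A w)⟫ := by
      rw [← hAG, real_inner_self_eq_norm_mul_norm]
    have e2 : ⟪w, G (A w)⟫ ≤ ‖w‖ * ‖G (A w)‖ := real_inner_le_norm _ _
    have e3 : ‖w‖ * ‖G (A w)‖ ≤ ‖w‖ * ‖A w‖ :=
      mul_le_mul_of_nonneg_left (hG _) (norm_nonneg _)
    by_contra hlt
    push Not at hlt
    have e4 : 0 < ‖A w‖ := lt_of_le_of_lt (norm_nonneg _) hlt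
    nlinarith
  set f : V := (InnerProductSpace.toDual ℝ V).symm F with hf
  have hfF : ∀ v, ⟪f, v⟫ = F v := fun v => InnerProductSpace.toDual_symm_apply
  let T : V → V := fun u => f - ε • A (N (G u))
  have hT : ∀ u, (∀ v : V, ⟪u, v⟫ + ε * ⟪N (G u), G v⟫ = F v) ↔ T u = u := by
    intro u
    have e : ∀ v, ⟪T u, v⟫ = F v - ε * ⟪N (G u), G v⟫ := by
      intro v
      simp only [T]
      rw [inner_sub_left, real_inner_smul_left, hAG, hfF]
    constructor
    · intro h
      refine ext_inner_right ℝ fun v => ?_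
      rw [e v, ← h v]; ring
    · intro h v
      have := e v
      rw [h] at this
      linarith
  have hTc : ContractingWith ⟨ε * L, mul_nonneg hε hL⟩ T := by
    refine ⟨NNReal.coe_lt_coe.1 hεL, LipschitzWith.of_dist_le_mul fun x y => ?_⟩
    rw [dist_eq_norm, dist_eq_norm]
    have e : T x - T y = ε • A (N (G y) - N (G x)) := by
      simp only [T, map_sub, smul_sub]; abel
    rw [e, norm_smul, Real.norm_of_nonneg hε]
    have e2 : ‖G y - G x‖ ≤ ‖x - y‖ := by
      rw [← map_sub, norm_sub_rev x y]; exact hG _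
    calc ε * ‖A (N (G y) - N (G x))‖ ≤ ε * (L * ‖x - y‖) := by
          refine mul_le_mul_of_nonneg_left ?_ hε
          exact ((hAn _).trans (hNLip _ _)).trans (mul_le_mul_of_nonneg_left e2 hL)
      _ = ε * L * ‖x - y‖ := by ring
  refine ⟨⟨hTc.fixedPoint T, (hT _).2 hTc.fixedPoint_isFixedPt, fun y hy =>
    hTc.fixedPoint_unique ((hT y).1 hy)⟩, fun u hu => ?_⟩
  rw [le_div_iff₀ h1]
  have hTu := (hT u).1 hu
  have e1 : ‖u‖ ≤ ‖f‖ + ε * ‖A (N (G u))‖ := by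
    calc ‖u‖ = ‖T u‖ := by rw [hTu]
      _ ≤ ‖f‖ + ‖ε • A (N (G u))‖ := norm_sub_le _ _
      _ = _ := by rw [norm_smul, Real.norm_of_nonneg hε]
  have e2 : ‖f‖ = ‖F‖ := LinearIsometryEquiv.norm_map _ _
  have e3 : ‖N (G u)‖ ≤ L * ‖G u‖ := by simpa [hN0] using hNLip (G u) 0
  have e4 : ε * ‖A (N (G u))‖ ≤ ε * (L * ‖u‖) := mul_le_mul_of_nonneg_left
    (((hAn _).trans e3).trans (mul_le_mul_of_nonneg_left (hG u) hL)) hε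
  linarith
end
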